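/- For every integer n ≥ 6, the metric dimension of the convex polytope graph Δ_n equals 3; that is, Δ_n has a resolving set of cardinality 3 and no resolving set of cardinality 2. -/

import Mathlib

/-- Vertices of the heptagonal circular ladder: four families indexed by `ZMod n`. -/
inductive HCLVertex (n : ℕ) : Type
  | p (t : ZMod n) : HCLVertex n
  | q (t : ZMod n) : HCLVertex n
  | r (t : ZMod n) : HCLVertex n
  | s (t : ZMod n) : HCLVertex n
deriving DecidableEq

/-- Base relation giving the edges of the heptagonal circular ladder `Γ_n`:
`p_t p_{t+1}`, `p_t q_t`, `q_t r_t`, `r_t s_t`, `s_t r_{t+1}` (indices mod `n`). -/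
def gammaRel (n : ℕ) : HCLVertex n → HCLVertex n → Prop
  | .p t, .p u => u = t + 1
  | .p t, .q u => u = t
  | .q t, .r u => u = t
  | .r t, .s u => u = t
  | .s t, .r u => u = t + 1
  | _, _ => False

/-- The heptagonal circular ladder `Γ_n`. -/
def Gamma (n : ℕ) : SimpleGraph (HCLVertex n) :=
  SimpleGraph.fromRel (gammaRel n)

/-- The extra edges `r_t q_{t+1}` added to `Γ_n` to obtain `Δ_n`. -/
def deltaRel (n : ℕ) : HCLVertex n → HCLVertex n → Prop
  | .r t, .q u => u = t + 1
  | _, _ => False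

/-- The convex polytope graph `Δ_n`, obtained from `Γ_n` by adding the edges `r_t q_{t+1}`. -/
def Delta (n : ℕ) : SimpleGraph (HCLVertex n) :=
  SimpleGraph.fromRel (fun v w => gammaRel n v w ∨ deltaRel n v w)

/-- `W` is a resolving set of `G`: every pair of distinct vertices is distinguished by
its distance to some vertex of `W`. -/
def IsResolving {V : Type*} (G : SimpleGraph V) (W : Set V) : Prop :=
  ∀ u v : V, u ≠ v → ∃ w ∈ W, G.dist w u ≠ G.dist w v

/-- Distance from a vertex `x` to an edge `e = yz`: `min (d x y) (d x z)`. -/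
noncomputable def edgeDist {V : Type*} (G : SimpleGraph V) (x : V) (e : Sym2 V) : ℕ :=
  Sym2.lift ⟨fun y z => min (G.dist x y) (G.dist x z), fun y z => min_comm _ _⟩ e

/-- `W` is an edge resolving set of `G`: every pair of distinct edges is distinguished by
its distance to some vertex of `W`. -/
def IsEdgeResolving {V : Type*} (G : SimpleGraph V) (W : Set V) : Prop :=
  ∀ e ∈ G.edgeSet, ∀ f ∈ G.edgeSet, e ≠ f → ∃ w ∈ W, edgeDist G w e ≠ edgeDist G w f

open HCLVertex

/-- Distances in a graph are determined by a function that vanishes only at the base point,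
changes by at most one along edges, and can always be decreased away from the base point. -/
theorem SimpleGraph.dist_eq_of_potential {V : Type*} {G : SimpleGraph V} {x : V} {f : V → ℕ}
    (hx : f x = 0) (hlip : ∀ u v, G.Adj u v → f v ≤ f u + 1)
    (hdesc : ∀ u, u ≠ x → ∃ v, G.Adj u v ∧ f v < f u) (y : V) : G.dist x y = f y := by
  have hwalk : ∀ {u v : V} (w : G.Walk u v), f v ≤ f u + w.length := by
    intro u v w
    induction w with
    | nil => simp
    | cons h _ ih =>
      have := hlip _ _ h
      rw [SimpleGraph.Walk.length_cons]
      omega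
  have hex : ∀ m, ∀ y : V, f y ≤ m → ∃ w : G.Walk y x, w.length ≤ f y := by
    intro m
    induction m with
    | zero =>
      intro y hy
      by_cases h : y = x
      · subst h
        exact ⟨.nil, by simp⟩
      · obtain ⟨v, -, hv⟩ := hdesc y h
        omega
    | succ m ih =>
      intro y hy
      by_cases h : y = x
      · subst h
        exact ⟨.nil, by simp⟩
      · obtain ⟨v, hadj, hv⟩ := hdesc y h
        obtain ⟨w, hw⟩ := ih v (by omega)
        exact ⟨.cons hadj w, by rw [SimpleGraph.Walk.length_cons]; omega⟩
  obtain ⟨w, hw⟩ := hex _ y le_rfl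
  apply le_antisymm
  · rw [SimpleGraph.dist_comm]
    exact (SimpleGraph.dist_le w).trans hw
  · obtain ⟨w', hw'⟩ := w.reverse.reachable.exists_walk_length_eq_dist
    have := hwalk w'
    omega

/-- The natural representative of `z` modulo `n`, in the range `-n ≤ z < n`. -/
def residue (n : ℕ) (z : ℤ) : ℕ := (if z < 0 then z + n else z).toNat

theorem val_intCast_sub_intCast {n : ℕ} [NeZero n] (i j : ℤ)
    (h₁ : -(n : ℤ) ≤ i - j) (h₂ : i - j < n) :
    ((i : ZMod n) - (j : ZMod n)).val = residue n (i - j) := by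
  have hres : (residue n (i - j) : ZMod n) = (i : ZMod n) - (j : ZMod n) := by
    have key : ∃ m : ℤ, (residue n (i - j) : ℤ) = i - j + n * m := by
      unfold residue
      split_ifs
      · exact ⟨1, by omega⟩
      · exact ⟨0, by omega⟩
    obtain ⟨m, hm⟩ := key
    have := congrArg (Int.cast : ℤ → ZMod n) hm
    push_cast at this
    simpa using this
  rw [← hres, ZMod.val_natCast_of_lt]
  have := NeZero.pos n
  unfold residue
  omega

/-- The successor of `v` modulo `n`, for `v < n`. -/
def cyclicSucc (n v : ℕ) : ℕ := if v + 1 = n then 0 else v + 1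

/-- The predecessor of `v` modulo `n`, for `v < n`. -/
def cyclicPred (n v : ℕ) : ℕ := if v = 0 then n - 1 else v - 1

theorem val_add_one_eq_cyclicSucc {n : ℕ} [NeZero n] (z : ZMod n) :
    (z + 1).val = cyclicSucc n z.val := by
  have hz := z.val_lt
  have h := val_intCast_sub_intCast (n := n) (z.val - n) (-1) (by omega) (by omega)
  rw [Int.cast_sub, Int.cast_natCast, Int.cast_natCast, ZMod.natCast_zmod_val, ZMod.natCast_self,
    sub_zero, Int.cast_neg, Int.cast_one, sub_neg_eq_add] at h
  rw [h]
  unfold residue cyclicSucc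
  split_ifs <;> omega

theorem val_sub_one_eq_cyclicPred {n : ℕ} [NeZero n] (z : ZMod n) :
    (z - 1).val = cyclicPred n z.val := by
  have hz := z.val_lt
  have h := val_intCast_sub_intCast (n := n) z.val 1 (by omega) (by omega)
  rw [Int.cast_natCast, ZMod.natCast_zmod_val, Int.cast_one] at h
  rw [h]
  unfold residue cyclicPred
  split_ifs <;> omega

/-- The function on the vertices of `Δ_n` given on each of the four families by a function of
the position relative to `c`. -/
def profile {n : ℕ} (P Q R S : ℕ → ℕ) (c : ZMod n) : HCLVertex n → ℕ
  | .p t => P (t - c).val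
  | .q t => Q (t - c).val
  | .r t => R (t - c).val
  | .s t => S (t - c).val

section Adjacency

variable {n : ℕ} (t : ZMod n)

theorem delta_adj_p_p (hn : 1 < n) : (Delta n).Adj (p t) (p (t + 1)) := by
  have : Fact (1 < n) := ⟨hn⟩
  simp [Delta, gammaRel, deltaRel]

theorem delta_adj_p_q : (Delta n).Adj (p t) (q t) := by
  simp [Delta, gammaRel, deltaRel]

theorem delta_adj_q_r : (Delta n).Adj (q t) (r t) := by
  simp [Delta, gammaRel, deltaRel]

theorem delta_adj_r_q : (Delta n).Adj (r t) (q (t + 1)) := by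
  simp [Delta, gammaRel, deltaRel]

theorem delta_adj_r_s : (Delta n).Adj (r t) (s t) := by
  simp [Delta, gammaRel, deltaRel]

theorem delta_adj_s_r : (Delta n).Adj (s t) (r (t + 1)) := by
  simp [Delta, gammaRel, deltaRel]

theorem delta_adj_p_sub_one (hn : 1 < n) : (Delta n).Adj (p t) (p (t - 1)) := by
  have h := (delta_adj_p_p (t - 1) hn).symm
  rwa [sub_add_cancel] at h

theorem delta_adj_q_sub_one : (Delta n).Adj (q t) (r (t - 1)) := by
  have h := (delta_adj_r_q (t - 1)).symm
  rwa [sub_add_cancel] at h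

theorem delta_adj_r_sub_one : (Delta n).Adj (r t) (s (t - 1)) := by
  have h := (delta_adj_s_r (t - 1)).symm
  rwa [sub_add_cancel] at h

end Adjacency

/-- Two naturals that differ by at most one. -/
def Near (a b : ℕ) : Prop := a ≤ b + 1 ∧ b ≤ a + 1

theorem near_of_delta_adj {n : ℕ} [NeZero n] {P Q R S : ℕ → ℕ} (c : ZMod n)
    (hPP : ∀ v < n, Near (P v) (P (cyclicSucc n v))) (hPQ : ∀ v < n, Near (P v) (Q v))
    (hQR : ∀ v < n, Near (Q v) (R v)) (hRQ : ∀ v < n, Near (R v) (Q (cyclicSucc n v)))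
    (hRS : ∀ v < n, Near (R v) (S v)) (hSR : ∀ v < n, Near (S v) (R (cyclicSucc n v)))
    {u w : HCLVertex n} (h : (Delta n).Adj u w) :
    Near (profile P Q R S c u) (profile P Q R S c w) := by
  have hrel : ∀ {u w : HCLVertex n}, gammaRel n u w ∨ deltaRel n u w →
      Near (profile P Q R S c u) (profile P Q R S c w) := by
    intro u w h
    have hsucc : ∀ t : ZMod n, (t + 1 - c).val = cyclicSucc n (t - c).val := fun t => by
      rw [add_sub_right_comm, val_add_one_eq_cyclicSucc]
    rcases u with t | t | t | t <;> rcases w with t' | t' | t' | t' <;>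
      simp only [gammaRel, deltaRel, or_false, false_or, or_self] at h <;> subst h <;>
      simp only [profile, hsucc] <;>
      first
      | exact hPP _ (ZMod.val_lt _) | exact hPQ _ (ZMod.val_lt _)
      | exact hQR _ (ZMod.val_lt _) | exact hRQ _ (ZMod.val_lt _)
      | exact hRS _ (ZMod.val_lt _) | exact hSR _ (ZMod.val_lt _)
  rw [Delta, SimpleGraph.fromRel_adj] at h
  rcases h.2 with h | h
  · exact hrel h
  · exact (hrel h).symm

theorem delta_dist_eq_profile {n : ℕ} (hn : 1 < n) {P Q R S : ℕ → ℕ} {c : ZMod n}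
    {x : HCLVertex n} (hx : profile P Q R S c x = 0)
    (hPP : ∀ v < n, Near (P v) (P (cyclicSucc n v))) (hPQ : ∀ v < n, Near (P v) (Q v))
    (hQR : ∀ v < n, Near (Q v) (R v)) (hRQ : ∀ v < n, Near (R v) (Q (cyclicSucc n v)))
    (hRS : ∀ v < n, Near (R v) (S v)) (hSR : ∀ v < n, Near (S v) (R (cyclicSucc n v)))
    (hP : ∀ v < n, P v = 0 ∧ x = p (c + (v : ZMod n)) ∨ P (cyclicSucc n v) < P v ∨
      P (cyclicPred n v) < P v ∨ Q v < P v)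
    (hQ : ∀ v < n, Q v = 0 ∧ x = q (c + (v : ZMod n)) ∨ P v < Q v ∨ R v < Q v ∨ R (cyclicPred n v) < Q v)
    (hR : ∀ v < n, Q v < R v ∨ Q (cyclicSucc n v) < R v ∨ S v < R v ∨ S (cyclicPred n v) < R v)
    (hS : ∀ v < n, S v = 0 ∧ x = s (c + (v : ZMod n)) ∨ R v < S v ∨ R (cyclicSucc n v) < S v)
    (y : HCLVertex n) : (Delta n).dist x y = profile P Q R S c y := by
  have : NeZero n := ⟨by omega⟩
  have hsucc : ∀ t : ZMod n, (t + 1 - c).val = cyclicSucc n (t - c).val := fun t => by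
    rw [add_sub_right_comm, val_add_one_eq_cyclicSucc]
  have hpred : ∀ t : ZMod n, (t - 1 - c).val = cyclicPred n (t - c).val := fun t => by
    rw [sub_right_comm, val_sub_one_eq_cyclicPred]
  have hself : ∀ t : ZMod n, c + ((t - c).val : ZMod n) = t := fun t => by simp
  have hlt : ∀ t : ZMod n, (t - c).val < n := fun t => ZMod.val_lt _
  refine SimpleGraph.dist_eq_of_potential hx
    (fun u w h => (near_of_delta_adj c hPP hPQ hQR hRQ hRS hSR h).2) (fun u hu => ?_) y
  rcases u with t | t | t | t
  · rcases hP _ (hlt t) with h | h | h | h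
    · exact absurd (h.2.trans (by rw [hself])) hu.symm
    · exact ⟨p (t + 1), delta_adj_p_p t hn, by simpa only [profile, hsucc] using h⟩
    · exact ⟨p (t - 1), delta_adj_p_sub_one t hn,
        by simpa only [profile, hpred] using h⟩
    · exact ⟨q t, delta_adj_p_q t, h⟩
  · rcases hQ _ (hlt t) with h | h | h | h
    · exact absurd (h.2.trans (by rw [hself])) hu.symm
    · exact ⟨p t, (delta_adj_p_q t).symm, h⟩
    · exact ⟨r t, delta_adj_q_r t, h⟩
    · exact ⟨r (t - 1), delta_adj_q_sub_one t,
        by simpa only [profile, hpred] using h⟩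
  · rcases hR _ (hlt t) with h | h | h | h
    · exact ⟨q t, (delta_adj_q_r t).symm, h⟩
    · exact ⟨q (t + 1), delta_adj_r_q t, by simpa only [profile, hsucc] using h⟩
    · exact ⟨s t, delta_adj_r_s t, h⟩
    · exact ⟨s (t - 1), delta_adj_r_sub_one t,
        by simpa only [profile, hpred] using h⟩
  · rcases hS _ (hlt t) with h | h | h
    · exact absurd (h.2.trans (by rw [hself])) hu.symm
    · exact ⟨r t, (delta_adj_r_s t).symm, h⟩
    · exact ⟨r (t + 1), delta_adj_s_r t, by simpa only [profile, hsucc] using h⟩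

theorem delta_dist_p {n : ℕ} (hn : 3 ≤ n) (c : ZMod n) (y : HCLVertex n) :
    (Delta n).dist (p c) y =
      profile (fun v => min v (n - v))
        (fun v => 1 + min v (n - v))
        (fun v => 2 + min v (n - 1 - v))
        (fun v => 3 + min v (n - 2 - v)) c y := by
  refine delta_dist_eq_profile (by omega) (by simp [profile]) ?_ ?_ ?_ ?_ ?_ ?_ ?_ ?_ ?_ ?_ y <;>
    intro v hv
  · unfold Near cyclicSucc
    split_ifs <;> omega
  · unfold Near
    omega
  · unfold Near
    omega
  · unfold Near cyclicSucc
    split_ifs <;> omega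
  · unfold Near
    omega
  · unfold Near cyclicSucc
    split_ifs <;> omega
  · rcases Nat.eq_zero_or_pos v with rfl | hv0
    · exact .inl ⟨by simp, by simp⟩
    · unfold cyclicSucc cyclicPred
      split_ifs <;> omega
  · unfold cyclicPred
    split_ifs <;> omega
  · unfold cyclicSucc cyclicPred
    split_ifs <;> omega
  · unfold cyclicSucc
    split_ifs <;> omega

theorem delta_dist_q {n : ℕ} (hn : 3 ≤ n) (c : ZMod n) (y : HCLVertex n) :
    (Delta n).dist (q c) y =
      profile (fun v => 1 + min v (n - v))
        (fun v => min (2 * min v (n - v)) (min v (n - v) + 2))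
        (fun v => 1 + min (2 * min v (n - 1 - v)) (min v (n - 1 - v) + 2))
        (fun v => 2 + min (2 * min v (n - 2 - v)) (min v (n - 2 - v) + 2)) c y := by
  refine delta_dist_eq_profile (by omega) (by simp [profile]) ?_ ?_ ?_ ?_ ?_ ?_ ?_ ?_ ?_ ?_ y <;>
    intro v hv
  · unfold Near cyclicSucc
    split_ifs <;> omega
  · unfold Near
    omega
  · unfold Near
    omega
  · unfold Near cyclicSucc
    split_ifs <;> omega
  · unfold Near
    omega
  · unfold Near cyclicSucc
    split_ifs <;> omega
  · unfold cyclicSucc cyclicPred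
    split_ifs <;> omega
  · rcases Nat.eq_zero_or_pos v with rfl | hv0
    · exact .inl ⟨by simp, by simp⟩
    · unfold cyclicPred
      split_ifs <;> omega
  · unfold cyclicSucc cyclicPred
    split_ifs <;> omega
  · unfold cyclicSucc
    split_ifs <;> omega

theorem delta_dist_s {n : ℕ} (hn : 3 ≤ n) (c : ZMod n) (y : HCLVertex n) :
    (Delta n).dist (s c) y =
      profile (fun v => 3 + min (v - 2) (n - v))
        (fun v => 2 + min (2 * min (v - 2) (n - v)) (min (v - 2) (n - v) + 2))
        (fun v => 1 + min (2 * min (v - 1) (n - v)) (min (v - 1) (n - v) + 3))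
        (fun v => min (2 * min v (n - v)) (min v (n - v) + 4)) c y := by
  refine delta_dist_eq_profile (by omega) (by simp [profile]) ?_ ?_ ?_ ?_ ?_ ?_ ?_ ?_ ?_ ?_ y <;>
    intro v hv
  · unfold Near cyclicSucc
    split_ifs <;> omega
  · unfold Near
    omega
  · unfold Near
    omega
  · unfold Near cyclicSucc
    split_ifs <;> omega
  · unfold Near
    omega
  · unfold Near cyclicSucc
    split_ifs <;> omega
  · unfold cyclicSucc cyclicPred
    split_ifs <;> omega
  · unfold cyclicPred
    split_ifs <;> omega
  · unfold cyclicSucc cyclicPred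
    split_ifs <;> omega
  · rcases Nat.eq_zero_or_pos v with rfl | hv0
    · exact .inl ⟨by simp, by simp⟩
    · unfold cyclicSucc
      split_ifs <;> omega

theorem not_isResolving_pair {V : Type*} {G : SimpleGraph V} {a b : V} (u v : V) (huv : u ≠ v)
    (ha : G.dist a u = G.dist a v) (hb : G.dist b u = G.dist b v) : ¬ IsResolving G {a, b} := by
  intro h
  obtain ⟨w, rfl | rfl, hw⟩ := h u v huv
  · exact hw ha
  · exact hw hb

theorem r_intCast_sub_one_ne {n : ℕ} (hn : 1 < n) (i : ℤ) :
    (r ((i - 1 : ℤ) : ZMod n)) ≠ r (i : ZMod n) := by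
  have : Fact (1 < n) := ⟨hn⟩
  simp

/-- The four neighbours of `r_t` have only three possible distances to any other vertex. -/
theorem not_isResolving_r {n : ℕ} (hn : 2 ≤ n) (t : ZMod n) (b : HCLVertex n) :
    ¬ IsResolving (Delta n) {r t, b} := by
  intro h
  have : Fact (1 < n) := ⟨hn⟩
  have hs := delta_adj_r_sub_one t
  have key : ∀ u v, (Delta n).Adj (r t) u → (Delta n).Adj (r t) v → u ≠ v →
      (Delta n).dist b u ≠ (Delta n).dist b v := fun u v hu hv huv heq =>
    not_isResolving_pair u v huv
      ((SimpleGraph.dist_eq_one_iff_adj.2 hu).trans (SimpleGraph.dist_eq_one_iff_adj.2 hv).symm)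
      heq h
  have hq := (delta_adj_q_r t).symm
  have hq' := delta_adj_r_q t
  have hr := delta_adj_r_s t
  have h₁ := key _ _ hq hq' (by simp)
  have h₂ := key _ _ hq hr (by simp)
  have h₃ := key _ _ hq hs (by simp)
  have h₄ := key _ _ hq' hr (by simp)
  have h₅ := key _ _ hq' hs (by simp)
  have h₆ := key _ _ hr hs (by simp [eq_comm (a := t)])
  have d₁ := hq.diff_dist_adj (u := b)
  have d₂ := hq'.diff_dist_adj (u := b)
  have d₃ := hr.diff_dist_adj (u := b)
  have d₄ := hs.diff_dist_adj (u := b)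
  omega

theorem not_isResolving_p_p {n : ℕ} (hn : 6 ≤ n) (i k : ℤ) (hk₀ : 0 < k) (hk : k < n) :
    ¬ IsResolving (Delta n) {p (i : ZMod n), p ((i + k : ℤ) : ZMod n)} := by
  have : NeZero n := ⟨by omega⟩
  have hcases : (2 * k + 2 ≤ n) ∨
      (n + 2 ≤ 2 * k) ∨
      (2 * k = n) ∨
      (2 * k + 1 = n) ∨
      (2 * k = n + 1) := by
    omega
  rcases hcases with h | h | h | h | h <;> [
    refine not_isResolving_pair (p (i - 1 : ℤ)) (q (i : ℤ)) (by simp) ?_ ?_;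
    refine not_isResolving_pair (p (i + k - 1 : ℤ)) (q (i + k : ℤ)) (by simp) ?_ ?_;
    refine not_isResolving_pair (r (i - 1 : ℤ)) (r (i : ℤ)) (r_intCast_sub_one_ne (by omega) _) ?_ ?_;
    refine not_isResolving_pair (q (i - 1 : ℤ)) (r (i : ℤ)) (by simp) ?_ ?_;
    refine not_isResolving_pair (q (i + k - 1 : ℤ)) (r (i + k : ℤ)) (by simp) ?_ ?_]
  all_goals
    rw [delta_dist_p (by omega), delta_dist_p (by omega)]
    simp (discharger := omega) only [profile, val_intCast_sub_intCast, residue]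
    omega

theorem not_isResolving_p_q {n : ℕ} (hn : 6 ≤ n) (i k : ℤ) (hk₀ : 0 ≤ k) (hk : k < n) :
    ¬ IsResolving (Delta n) {p (i : ZMod n), q ((i + k : ℤ) : ZMod n)} := by
  have : NeZero n := ⟨by omega⟩
  have hcases : (2 ≤ k ∧ 2 * k + 2 ≤ n) ∨
      (n + 2 ≤ 2 * k) ∨
      (k ≤ 1) ∨
      (2 * k = n) ∨
      (2 * k + 1 = n) ∨
      (2 * k = n + 1) := by
    omega
  rcases hcases with h | h | h | h | h | h <;> [
    refine not_isResolving_pair (p (i - 1 : ℤ)) (q (i : ℤ)) (by simp) ?_ ?_;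
    refine not_isResolving_pair (q (i + k - 1 : ℤ)) (s (i + k - 1 : ℤ)) (by simp) ?_ ?_;
    refine not_isResolving_pair (p (i + k - 3 : ℤ)) (q (i + k - 2 : ℤ)) (by simp) ?_ ?_;
    refine not_isResolving_pair (r (i - 1 : ℤ)) (r (i : ℤ)) (r_intCast_sub_one_ne (by omega) _) ?_ ?_;
    refine not_isResolving_pair (q (i - 1 : ℤ)) (r (i : ℤ)) (by simp) ?_ ?_;
    refine not_isResolving_pair (q (i + k - 1 : ℤ)) (s (i + k : ℤ)) (by simp) ?_ ?_]
  all_goals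
    simp only [delta_dist_p (show 3 ≤ n by omega),
      delta_dist_q (show 3 ≤ n by omega)]
    simp (discharger := omega) only [profile, val_intCast_sub_intCast, residue]
    omega

theorem not_isResolving_p_s {n : ℕ} (hn : 6 ≤ n) (i k : ℤ) (hk₀ : 0 ≤ k) (hk : k < n) :
    ¬ IsResolving (Delta n) {p (i : ZMod n), s ((i + k : ℤ) : ZMod n)} := by
  have : NeZero n := ⟨by omega⟩
  have hcases : (1 ≤ k ∧ 2 * k + 2 ≤ n) ∨
      (n ≤ 2 * k + 1 ∧ k + 3 ≤ n) ∨
      (k + 2 = n) ∨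
      (k + 1 = n) ∨
      (k = 0) := by
    omega
  rcases hcases with h | h | h | h | h <;> [
    refine not_isResolving_pair (p (i + k + 1 : ℤ)) (r (i + k - 1 : ℤ)) (by simp) ?_ ?_;
    refine not_isResolving_pair (q (i + k + 1 : ℤ)) (s (i + k + 1 : ℤ)) (by simp) ?_ ?_;
    refine not_isResolving_pair (q (i + k : ℤ)) (s (i + k + 1 : ℤ)) (by simp) ?_ ?_;
    refine not_isResolving_pair (r (i - 1 : ℤ)) (r (i : ℤ)) (r_intCast_sub_one_ne (by omega) _) ?_ ?_;
    refine not_isResolving_pair (p (i + 2 : ℤ)) (r (i - 1 : ℤ)) (by simp) ?_ ?_]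
  all_goals
    simp only [delta_dist_p (show 3 ≤ n by omega),
      delta_dist_s (show 3 ≤ n by omega)]
    simp (discharger := omega) only [profile, val_intCast_sub_intCast, residue]
    omega

theorem not_isResolving_q_q {n : ℕ} (hn : 6 ≤ n) (i k : ℤ) (hk₀ : 0 < k) (hk : k < n) :
    ¬ IsResolving (Delta n) {q (i : ZMod n), q ((i + k : ℤ) : ZMod n)} := by
  have : NeZero n := ⟨by omega⟩
  have hcases : (3 ≤ k ∧ 2 * k + 2 ≤ n) ∨
      (n + 2 ≤ 2 * k ∧ k + 3 ≤ n) ∨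
      (k = 2 ∨ k + 1 = n ∨ n = 7 ∧ k = 3) ∨
      (n = 7 ∧ k = 4) ∨
      (k = 1 ∨ k + 2 = n) ∨
      (2 * k = n) ∨
      (n ≠ 7 ∧ 2 * k + 1 = n) ∨
      (n ≠ 7 ∧ 2 * k = n + 1) := by
    omega
  rcases hcases with h | h | h | h | h | h | h | h <;> [
    refine not_isResolving_pair (q (i - 1 : ℤ)) (s (i - 1 : ℤ)) (by simp) ?_ ?_;
    refine not_isResolving_pair (q (i + k - 1 : ℤ)) (s (i + k - 1 : ℤ)) (by simp) ?_ ?_;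
    refine not_isResolving_pair (q (i + 1 : ℤ)) (s (i : ℤ)) (by simp) ?_ ?_;
    refine not_isResolving_pair (q (i + 2 : ℤ)) (s (i + 1 : ℤ)) (by simp) ?_ ?_;
    refine not_isResolving_pair (q (i + k + 1 : ℤ)) (s (i + k : ℤ)) (by simp) ?_ ?_;
    refine not_isResolving_pair (r (i - 1 : ℤ)) (r (i : ℤ)) (r_intCast_sub_one_ne (by omega) _) ?_ ?_;
    refine not_isResolving_pair (q (i - 1 : ℤ)) (s (i : ℤ)) (by simp) ?_ ?_;
    refine not_isResolving_pair (q (i + k - 1 : ℤ)) (s (i + k : ℤ)) (by simp) ?_ ?_]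
  all_goals
    rw [delta_dist_q (by omega), delta_dist_q (by omega)]
    simp (discharger := omega) only [profile, val_intCast_sub_intCast, residue]
    omega

theorem not_isResolving_q_s {n : ℕ} (hn : 6 ≤ n) (i k : ℤ) (hk₀ : 0 ≤ k) (hk : k < n) :
    ¬ IsResolving (Delta n) {q (i : ZMod n), s ((i + k : ℤ) : ZMod n)} := by
  have : NeZero n := ⟨by omega⟩
  have hcases : (k = 0 ∨ 3 ≤ k ∧ 2 * k + 2 ≤ n) ∨
      (n ≤ 2 * k + 1 ∧ k + 5 ≤ n) ∨
      (3 ≤ k ∧ k + 4 = n) ∨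
      (k = 1 ∨ k = 2 ∨ n ≤ k + 3 ∧ k ≠ 0) := by
    omega
  rcases hcases with h | h | h | h <;> [
    refine not_isResolving_pair (q (i + k + 1 : ℤ)) (s (i + k - 1 : ℤ)) (by simp) ?_ ?_;
    refine not_isResolving_pair (q (i + k + 1 : ℤ)) (s (i + k + 1 : ℤ)) (by simp) ?_ ?_;
    refine not_isResolving_pair (p (i : ℤ)) (r (i - 1 : ℤ)) (by simp) ?_ ?_;
    refine not_isResolving_pair (q (i + 1 : ℤ)) (s (i : ℤ)) (by simp) ?_ ?_]
  all_goals
    simp only [delta_dist_q (show 3 ≤ n by omega),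
      delta_dist_s (show 3 ≤ n by omega)]
    simp (discharger := omega) only [profile, val_intCast_sub_intCast, residue]
    omega

theorem not_isResolving_s_s {n : ℕ} (hn : 6 ≤ n) (i k : ℤ) (hk₀ : 0 < k) (hk : k < n) :
    ¬ IsResolving (Delta n) {s (i : ZMod n), s ((i + k : ℤ) : ZMod n)} := by
  have : NeZero n := ⟨by omega⟩
  have hcases : (5 ≤ k ∧ 2 * k ≤ n) ∨
      (n ≤ 2 * k ∧ k + 5 ≤ n) ∨
      (k ≤ 2 ∨ k + 4 = n ∨ k + 3 = n) ∨
      (n ≤ k + 2 ∨ k = 3 ∨ k = 4) := by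
    omega
  rcases hcases with h | h | h | h <;> [
    refine not_isResolving_pair (p (i + k + 1 : ℤ)) (r (i + k - 1 : ℤ)) (by simp) ?_ ?_;
    refine not_isResolving_pair (p (i + 1 : ℤ)) (r (i - 1 : ℤ)) (by simp) ?_ ?_;
    refine not_isResolving_pair (q (i : ℤ)) (s (i - 1 : ℤ)) (by simp) ?_ ?_;
    refine not_isResolving_pair (q (i + k : ℤ)) (s (i + k - 1 : ℤ)) (by simp) ?_ ?_]
  all_goals
    rw [delta_dist_s (by omega), delta_dist_s (by omega)]
    simp (discharger := omega) only [profile, val_intCast_sub_intCast, residue]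
    omega

theorem residue_of_nonneg {n : ℕ} {z : ℤ} (h : 0 ≤ z) : residue n z = z.toNat := by
  rw [residue, if_neg (by omega)]

theorem residue_of_neg {n : ℕ} {z : ℤ} (h : z < 0) : residue n z = (z + n).toNat := by
  rw [residue, if_pos h]

set_option maxHeartbeats 4000000 in
theorem isResolving_p_triple {n : ℕ} (hn : 6 ≤ n) :
    IsResolving (Delta n) {p ((0 : ℤ) : ZMod n), p ((1 : ℤ) : ZMod n),
      p (((n / 2 : ℕ) : ℤ) : ZMod n)} := by
  have : NeZero n := ⟨by omega⟩
  intro u w huw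
  by_contra! h
  have h₀ := h (p ((0 : ℤ) : ZMod n)) (by simp)
  have h₁ := h (p ((1 : ℤ) : ZMod n)) (by simp)
  have h₂ := h (p (((n / 2 : ℕ) : ℤ) : ZMod n)) (by simp)
  have hrep : ∀ t : ZMod n, ∃ j : ℕ, (j = 0 ∨ 1 ≤ j ∧ j < n / 2 ∨ n / 2 ≤ j ∧ j < n) ∧
      t = ((j : ℤ) : ZMod n) := fun t =>
    ⟨t.val, by have := t.val_lt; omega, by simp⟩
  simp only [delta_dist_p (show 3 ≤ n by omega)] at h₀ h₁ h₂
  rcases u with t | t | t | t <;> rcases w with t' | t' | t' | t' <;>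
    obtain ⟨j, rfl | hj | hj, rfl⟩ := hrep t <;> obtain ⟨j', rfl | hj' | hj', rfl⟩ := hrep t' <;>
    simp (discharger := omega) only [profile, val_intCast_sub_intCast, residue_of_nonneg,
      residue_of_neg, sub_zero, Int.toNat_natCast,
      min_eq_left, min_eq_right] at h₀ h₁ h₂ <;>
    clear h hrep <;>
    first
    | exact huw rfl
    | omega
    | exact huw (by congr 2; omega)

theorem exists_intCast_add {n : ℕ} [NeZero n] (a b : ZMod n) :
    ∃ i k : ℤ, 0 ≤ k ∧ k < n ∧ a = (i : ZMod n) ∧ b = ((i + k : ℤ) : ZMod n) :=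
  ⟨a.val, (b - a).val, by positivity, by exact_mod_cast ZMod.val_lt _, by simp, by simp⟩

theorem not_isResolving_delta_pair {n : ℕ} (hn : 6 ≤ n) {x y : HCLVertex n} (hxy : x ≠ y) :
    ¬ IsResolving (Delta n) {x, y} := by
  have : NeZero n := ⟨by omega⟩
  have hpos : ∀ {i k : ℤ}, 0 ≤ k → (i : ZMod n) ≠ ((i + k : ℤ) : ZMod n) → 0 < k := by
    intro i k hk h
    refine lt_of_le_of_ne hk ?_
    rintro rfl
    simp at h
  rcases x with a | a | a | a <;> rcases y with b | b | b | b
  case r.p | r.q | r.r | r.s => exact not_isResolving_r (by omega) _ _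
  case p.r | q.r | s.r => rw [Set.pair_comm]; exact not_isResolving_r (by omega) _ _
  case q.p | s.p | s.q =>
    rw [Set.pair_comm]
    obtain ⟨i, k, hk₀, hk, rfl, rfl⟩ := exists_intCast_add b a
    first
    | exact not_isResolving_p_q hn i k hk₀ hk
    | exact not_isResolving_p_s hn i k hk₀ hk
    | exact not_isResolving_q_s hn i k hk₀ hk
  all_goals
    obtain ⟨i, k, hk₀, hk, rfl, rfl⟩ := exists_intCast_add a b
    first
    | exact not_isResolving_p_q hn i k hk₀ hk
    | exact not_isResolving_p_s hn i k hk₀ hk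
    | exact not_isResolving_q_s hn i k hk₀ hk
    | exact not_isResolving_p_p hn i k (hpos hk₀ fun h => hxy (congrArg p h)) hk
    | exact not_isResolving_q_q hn i k (hpos hk₀ fun h => hxy (congrArg q h)) hk
    | exact not_isResolving_s_s hn i k (hpos hk₀ fun h => hxy (congrArg s h)) hk

theorem delta_metric_dimension_eq_three (n : ℕ) (hn : 6 ≤ n) :
    (∃ W : Finset (HCLVertex n), W.card = 3 ∧ IsResolving (Delta n) ↑W) ∧
    (∀ W : Finset (HCLVertex n), W.card = 2 → ¬ IsResolving (Delta n) ↑W) := by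
  have : NeZero n := ⟨by omega⟩
  constructor
  · have hne : ∀ i j : ℤ, 0 ≤ i → i < j → j < n → (p (i : ZMod n) : HCLVertex n) ≠ p j := by
      intro i j hi hij hj h
      injection h with h
      have := congrArg ZMod.val (sub_eq_zero.2 h)
      rw [val_intCast_sub_intCast _ _ (by omega) (by omega), ZMod.val_zero] at this
      unfold residue at this
      omega
    refine ⟨{p ((0 : ℤ) : ZMod n), p ((1 : ℤ) : ZMod n), p (((n / 2 : ℕ) : ℤ) : ZMod n)},
      Finset.card_eq_three.2 ⟨_, _, _, hne _ _ ?_ ?_ ?_, hne _ _ ?_ ?_ ?_, hne _ _ ?_ ?_ ?_, rfl⟩,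
      ?_⟩
    on_goal 10 => simpa using isResolving_p_triple hn
    all_goals omega
  · intro W hW
    obtain ⟨x, y, hxy, rfl⟩ := Finset.card_eq_two.1 hW
    simpa using not_isResolving_delta_pair hn hxy
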